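/- Given complexes of R-modules and morphisms fᵢ : Aᵢ• → Cᵢ•, gᵢ : Bᵢ• → Cᵢ• (i = 1,2,3), cup products ∪_A, ∪_B, ∪_C on the A's, B's, C's respectively, and homotopies h_f : ∪_C ∘ (f₁ ⊗ f₂) ⇝ f₃ ∘ ∪_A and h_g : ∪_C ∘ (g₁ ⊗ g₂) ⇝ g₃ ∘ ∪_B, set Eᵢ• = cone(Aᵢ• ⊕ Bᵢ• →^{fᵢ−gᵢ} Cᵢ•)[−1], so Eᵢⁿ = Aᵢⁿ ⊕ Bᵢⁿ ⊕ Cᵢⁿ⁻¹ with d(a,b,c) = (da, db, −fᵢ(a)+gᵢ(b)−dc). Then for each r ∈ R the formula (a_n,b_n,c_{n−1}) ∪_{r,h} (a'_m,b'_m,c'_{m−1}) = (a_n ∪_A a'_m, b_n ∪_B b'_m, c_{n−1} ∪_C (r f₂(a'_m)+(1−r)g₂(b'_m)) + (−1)^n ((1−r)f₁(a_n)+r g₁(b_n)) ∪_C c'_{m−1} − (h_f(a_n ⊗ a'_m) − h_g(b_n ⊗ b'_m))) defines a morphism of complexes E₁• ⊗ E₂• → E₃•. -/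

import Mathlib

/-- A cochain complex of `R`-modules indexed by `ℤ`. -/
structure Cx (R : Type) [CommRing R] where
  X : ℤ → Type
  [ab : ∀ n, AddCommGroup (X n)]
  [md : ∀ n, Module R (X n)]
  d : ∀ n, X n →ₗ[R] X (n + 1)
  dsq : ∀ n (x : X n), d (n + 1) (d n x) = 0

attribute [instance] Cx.ab Cx.md

/-- A morphism of complexes of `R`-modules. -/
structure Mor {R : Type} [CommRing R] (A B : Cx R) where
  f : ∀ n, A.X n →ₗ[R] B.X n
  comm : ∀ n (x : A.X n), B.d n (f n x) = f (n + 1) (A.d n x)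

/-- The differential of the total complex `T•(A•) = Tot(A• --(φ-1)--> A•)`.
Here `T^{n+1}(A) = Aⁿ ⊕ Aⁿ⁺¹` and
`d(a_{n}, a_{n+1}) = (d a_n + (-1)^{n+1} (φ-1) a_{n+1}, d a_{n+1})`. -/
def Td {R : Type} [CommRing R] (A : Cx R) (φ : Mor A A) (n : ℤ)
    (p : A.X n × A.X (n + 1)) : A.X (n + 1) × A.X (n + 1 + 1) :=
  (A.d n p.1 + (Int.negOnePow (n + 1) : ℤ) • (φ.f (n + 1) p.2 - p.2),
    A.d (n + 1) p.2)

/-- The map induced on total complexes by a morphism `α` (componentwise). -/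
def Tmor {R : Type} [CommRing R] {A B : Cx R} (α : Mor A B) (n : ℤ)
    (p : A.X n × A.X (n + 1)) : B.X n × B.X (n + 1) :=
  (α.f n p.1, α.f (n + 1) p.2)
/-- A morphism of complexes `A• ⊗ B• → C•`, given by its bilinear components
`Aⁿ ⊗ Bᵐ → Cⁿ⁺ᵐ` satisfying the Leibniz rule
`d(x ∪ y) = dx ∪ y + (-1)ⁿ x ∪ dy`. -/
structure Cup {R : Type} [CommRing R] (A B C : Cx R) where
  c : ∀ n m k, n + m = k → A.X n →ₗ[R] B.X m →ₗ[R] C.X k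
  leib : ∀ (n m k : ℤ) (hk : n + m = k) (x : A.X n) (y : B.X m),
    C.d k (c n m k hk x y)
      = c (n + 1) m (k + 1) (by omega) (A.d n x) y
        + (Int.negOnePow n : ℤ) • c n (m + 1) (k + 1) (by omega) x (B.d m y)

/-- The cup product `∪ᵀ : T•(A₁•) ⊗ T•(A₂•) → T•(A₃•)` induced by
`∪ : A₁• ⊗ A₂• → A₃•`:
`(x_{n}, x_{n+1}) ∪ᵀ (y_{m}, y_{m+1}) =
  (x_{n+1} ∪ y_m + (-1)^{m+1} x_n ∪ φ₂(y_{m+1}), x_{n+1} ∪ y_{m+1})`. -/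
def cupT {R : Type} [CommRing R] {A₁ A₂ A₃ : Cx R} (φ₂ : Mor A₂ A₂)
    (cup : Cup A₁ A₂ A₃) (n m k : ℤ) (hk : n + m = k)
    (p : A₁.X n × A₁.X (n + 1)) (q : A₂.X m × A₂.X (m + 1)) :
    A₃.X (k + 1) × A₃.X (k + 1 + 1) :=
  (cup.c (n + 1) m (k + 1) (by omega) p.2 q.1
      + (Int.negOnePow (m + 1) : ℤ) •
          cup.c n (m + 1) (k + 1) (by omega) p.1 (φ₂.f (m + 1) q.2),
    cup.c (n + 1) (m + 1) (k + 1 + 1) (by omega) p.2 q.2)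

/-- The differential of `Eᵢ• = cone(Aᵢ• ⊕ Bᵢ• --(f-g)--> Cᵢ•)[-1]`:
`E^{n+1} = Aⁿ⁺¹ ⊕ Bⁿ⁺¹ ⊕ Cⁿ` and `d(a,b,c) = (da, db, -f(a)+g(b)-dc)`. -/
def Ed {R : Type} [CommRing R] {A B C : Cx R} (f : Mor A C) (g : Mor B C) (n : ℤ)
    (p : A.X (n + 1) × B.X (n + 1) × C.X n) :
    A.X (n + 1 + 1) × B.X (n + 1 + 1) × C.X (n + 1) :=
  (A.d (n + 1) p.1, B.d (n + 1) p.2.1,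
    -f.f (n + 1) p.1 + g.f (n + 1) p.2.1 - C.d n p.2.2)

/-- The cup product `∪_{r,h} : E₁• ⊗ E₂• → E₃•` of Nekovář–Nizioł:
`(a,b,c) ∪_{r,h} (a',b',c') = (a ∪_A a', b ∪_B b',
   c ∪_C (r f₂(a') + (1-r) g₂(b'))
   + (-1)^{deg} ((1-r) f₁(a) + r g₁(b)) ∪_C c'
   - (h_f(a ⊗ a') - h_g(b ⊗ b')))`. -/
def cupE {R : Type} [CommRing R]
    {A₁ A₂ A₃ B₁ B₂ B₃ C₁ C₂ C₃ : Cx R}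
    (f₁ : Mor A₁ C₁) (f₂ : Mor A₂ C₂) (g₁ : Mor B₁ C₁) (g₂ : Mor B₂ C₂)
    (cupA : Cup A₁ A₂ A₃) (cupB : Cup B₁ B₂ B₃) (cupC : Cup C₁ C₂ C₃)
    (hf : ∀ n m k, n + m = k + 1 → A₁.X n →ₗ[R] A₂.X m →ₗ[R] C₃.X k)
    (hg : ∀ n m k, n + m = k + 1 → B₁.X n →ₗ[R] B₂.X m →ₗ[R] C₃.X k)
    (r : R) (n m k : ℤ) (hk : n + m = k)
    (p : A₁.X (n + 1) × B₁.X (n + 1) × C₁.X n)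
    (q : A₂.X (m + 1) × B₂.X (m + 1) × C₂.X m) :
    A₃.X (k + 1 + 1) × B₃.X (k + 1 + 1) × C₃.X (k + 1) :=
  (cupA.c (n + 1) (m + 1) (k + 1 + 1) (by omega) p.1 q.1,
    cupB.c (n + 1) (m + 1) (k + 1 + 1) (by omega) p.2.1 q.2.1,
    cupC.c n (m + 1) (k + 1) (by omega) p.2.2
        (r • f₂.f (m + 1) q.1 + (1 - r) • g₂.f (m + 1) q.2.1)
      + (Int.negOnePow (n + 1) : ℤ) •
          cupC.c (n + 1) m (k + 1) (by omega)
            ((1 - r) • f₁.f (n + 1) p.1 + r • g₁.f (n + 1) p.2.1) q.2.2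
      - (hf (n + 1) (m + 1) (k + 1) (by omega) p.1 q.1
          - hg (n + 1) (m + 1) (k + 1) (by omega) p.2.1 q.2.1))

/-!
`Eᵢ` is the mapping fibre of `φᵢ = fᵢ - gᵢ : Aᵢ ⊕ Bᵢ → Cᵢ`. Quite generally, for morphisms
`φᵢ : Dᵢ → Cᵢ`, the fibres of `φ₁` and `φ₂` pair into that of `φ₃` as soon as there are morphisms
`s : D₁ → C₁`, `t : D₂ → C₂` and a homotopy `φ₁ ∪ t + s ∪ φ₂ ⇝ φ₃ ∘ ∪`. Here
`s = (1 - r) f₁ + r g₁` and `t = r f₂ + (1 - r) g₂` satisfy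
`φ₁ ∪ t + s ∪ φ₂ = f₁ ∪ f₂ - g₁ ∪ g₂`, so `h_f - h_g` is such a homotopy.
-/

section Constructions

variable {R : Type} [CommRing R] {A A' B B' C C' : Cx R}

/-- The direct sum `A• ⊕ B•`. -/
abbrev Cx.prod (A B : Cx R) : Cx R where
  X n := A.X n × B.X n
  d n := (A.d n).prodMap (B.d n)
  dsq n x := Prod.ext (A.dsq n x.1) (B.dsq n x.2)

instance : Neg (Mor A B) where
  neg f := ⟨fun n ↦ -f.f n, fun n x ↦ by simp [f.comm]⟩

instance : SMul R (Mor A B) where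
  smul r f := ⟨fun n ↦ r • f.f n, fun n x ↦ by simp [f.comm]⟩

theorem Mor.neg_f (f : Mor A B) (n : ℤ) : (-f).f n = -f.f n := rfl

theorem Mor.smul_f (r : R) (f : Mor A B) (n : ℤ) : (r • f).f n = r • f.f n := rfl

/-- The morphism `A• ⊕ B• → C•` that restricts to `f` on `A•` and to `g` on `B•`. -/
@[simps]
def Mor.coprod (f : Mor A C) (g : Mor B C) : Mor (A.prod B) C where
  f n := (f.f n).coprod (g.f n)
  comm n x := (map_add _ _ _).trans (congrArg₂ (· + ·) (f.comm n x.1) (g.comm n x.2))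

instance : Add (Cup A B C) where
  add u v :=
    { c n m k hk := u.c n m k hk + v.c n m k hk
      leib n m k hk x y := by
        simp only [LinearMap.add_apply, map_add, u.leib, v.leib, smul_add]
        abel }

theorem Cup.add_c (u v : Cup A B C) (n m k : ℤ) (hk : n + m = k) :
    (u + v).c n m k hk = u.c n m k hk + v.c n m k hk := rfl

/-- The pairing `∪ ∘ (f ⊗ g)`. -/
@[simps]
def Cup.comap (u : Cup A' B' C) (f : Mor A A') (g : Mor B B') : Cup A B C where
  c n m k hk := (u.c n m k hk).compl₁₂ (f.f n) (g.f m)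
  leib n m k hk x y := by simp [u.leib, f.comm, g.comm]

/-- The pairing `f ∘ ∪`. -/
def Cup.map (u : Cup A B C) (f : Mor C C') : Cup A B C' where
  c n m k hk := (u.c n m k hk).compr₂ (f.f k)
  leib n m k hk x y := by simp [u.leib, f.comm]

/-- The componentwise pairing of direct sums, `(a, b) ∪ (a', b') = (a ∪ a', b ∪ b')`. -/
def Cup.prod (u : Cup A B C) (v : Cup A' B' C') :
    Cup (A.prod A') (B.prod B') (C.prod C') where
  c n m k hk := .mk₂ R
    (fun (x : A.X n × A'.X n) (y : B.X m × B'.X m) ↦ (u.c n m k hk x.1 y.1, v.c n m k hk x.2 y.2))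
    (by simp) (by simp) (by simp) (by simp)
  leib n m k hk x y := Prod.ext (u.leib n m k hk x.1 y.1) (v.leib n m k hk x.2 y.2)

/-- A homotopy `u ⇝ v` between morphisms `A• ⊗ B• → C•`, given by its bilinear components; the
differential of `A• ⊗ B•` is expanded by the Leibniz rule. -/
structure Cup.Homotopy (u v : Cup A B C) where
  h : ∀ n m k, n + m = k + 1 → A.X n →ₗ[R] B.X m →ₗ[R] C.X k
  comm : ∀ (n m k : ℤ) (e : n + m = k + 1) (x : A.X n) (y : B.X m),
    C.d k (h n m k e x y) + h (n + 1) m (k + 1) (by lia) (A.d n x) y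
        + (Int.negOnePow n : ℤ) • h n (m + 1) (k + 1) (by lia) x (B.d m y)
      = v.c n m (k + 1) e x y - u.c n m (k + 1) e x y

end Constructions

section Fiber

variable {R : Type} [CommRing R]

/-- The differential `(x, c) ↦ (dx, -φ(x) - dc)` of the mapping fibre `cone(φ)[-1]`, from degree
`n + 1`, which is `Dⁿ⁺¹ ⊕ Cⁿ`, to degree `n + 2`. -/
def Mor.fiberD {D C : Cx R} (φ : Mor D C) (n : ℤ) (p : D.X (n + 1) × C.X n) :
    D.X (n + 1 + 1) × C.X (n + 1) :=
  (D.d (n + 1) p.1, -φ.f (n + 1) p.1 - C.d n p.2)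

variable {C₁ C₂ C₃ D₁ D₂ D₃ : Cx R} {cupD : Cup D₁ D₂ D₃} {cupC : Cup C₁ C₂ C₃}
  {φ₁ s : Mor D₁ C₁} {φ₂ t : Mor D₂ C₂} {φ₃ : Mor D₃ C₃}

/-- The pairing `(x, c) ∪ (x', c') = (x ∪ x', c ∪ t(x') + (-1)^deg x • s(x) ∪ c' - H(x, x'))` of
mapping fibres. -/
def Cup.Homotopy.fiberCup
    (H : Cup.Homotopy (cupC.comap φ₁ t + cupC.comap s φ₂) (cupD.map φ₃))
    (n m k : ℤ) (hk : n + m = k) (p : D₁.X (n + 1) × C₁.X n) (q : D₂.X (m + 1) × C₂.X m) :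
    D₃.X (k + 1 + 1) × C₃.X (k + 1) :=
  (cupD.c (n + 1) (m + 1) (k + 1 + 1) (by lia) p.1 q.1,
    cupC.c n (m + 1) (k + 1) (by lia) p.2 (t.f (m + 1) q.1)
      + (Int.negOnePow (n + 1) : ℤ) •
          cupC.c (n + 1) m (k + 1) (by lia) (s.f (n + 1) p.1) q.2
      - H.h (n + 1) (m + 1) (k + 1) (by lia) p.1 q.1)

theorem Cup.Homotopy.fiberD_fiberCup
    (H : Cup.Homotopy (cupC.comap φ₁ t + cupC.comap s φ₂) (cupD.map φ₃))
    (n m k : ℤ) (hk : n + m = k) (p : D₁.X (n + 1) × C₁.X n) (q : D₂.X (m + 1) × C₂.X m) :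
    φ₃.fiberD (k + 1) (H.fiberCup n m k hk p q)
      = H.fiberCup (n + 1) m (k + 1) (by lia) (φ₁.fiberD n p) q
        + (Int.negOnePow (n + 1) : ℤ) •
            H.fiberCup n (m + 1) (k + 1) (by lia) p (φ₂.fiberD m q) := by
  obtain ⟨x, c⟩ := p
  obtain ⟨y, c'⟩ := q
  refine Prod.ext (cupD.leib (n + 1) (m + 1) (k + 1 + 1) (by lia) x y) ?_
  have leib_left := cupC.leib n (m + 1) (k + 1) (by lia) c (t.f (m + 1) y)
  have leib_right := cupC.leib (n + 1) m (k + 1) (by lia) (s.f (n + 1) x) c'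
  have homotopy : _ = φ₃.f _ (cupD.c _ _ _ _ x y)
      - (cupC.c _ _ _ _ (φ₁.f _ x) (t.f _ y) + cupC.c _ _ _ _ (s.f _ x) (φ₂.f _ y)) :=
    H.comm (n + 1) (m + 1) (k + 1) (by lia) x y
  rw [t.comm] at leib_left
  rw [s.comm] at leib_right
  simp only [Mor.fiberD, Cup.Homotopy.fiberCup, Prod.snd_add, Prod.smul_snd, map_add, map_sub,
    map_neg, map_zsmul, LinearMap.sub_apply, LinearMap.neg_apply]
  have sign_sq : ((n + 1).negOnePow : ℤ) * (n + 1).negOnePow = 1 := by simp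
  have sign_succ : ((n + 1 + 1).negOnePow : ℤ) = -(n + 1).negOnePow := by
    simp [Int.negOnePow_succ]
  have sign_pred : (n.negOnePow : ℤ) = -(n + 1).negOnePow := by simp [Int.negOnePow_succ]
  rw [sign_succ]
  rw [sign_pred] at leib_left
  linear_combination (norm := module) homotopy - leib_left
    - ((n + 1).negOnePow : ℤ) • leib_right
    + sign_sq • cupC.c (n + 1) (m + 1) (k + 1 + 1) (by lia) (s.f (n + 1) x) (φ₂.f (m + 1) y)

end Fiber

section Difference

variable {R : Type} [CommRing R]

theorem bilin_interpolation {M N P : Type*} [AddCommGroup M] [AddCommGroup N] [AddCommGroup P]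
    [Module R M] [Module R N] [Module R P] (β : M →ₗ[R] N →ₗ[R] P) (r : R) (x y : M) (x' y' : N) :
    β (x - y) (r • x' + (1 - r) • y') + β ((1 - r) • x + r • y) (x' - y') = β x x' - β y y' := by
  simp only [map_add, map_sub, map_smul, LinearMap.add_apply, LinearMap.sub_apply,
    LinearMap.smul_apply]
  module

variable {A₁ A₂ A₃ B₁ B₂ B₃ C₁ C₂ C₃ : Cx R}

theorem Cup.interpolation_c_apply (u : Cup C₁ C₂ C₃) (f₁ : Mor A₁ C₁) (f₂ : Mor A₂ C₂)
    (g₁ : Mor B₁ C₁) (g₂ : Mor B₂ C₂) (r : R) (n m k : ℤ) (hk : n + m = k)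
    (x : (A₁.prod B₁).X n) (y : (A₂.prod B₂).X m) :
    (u.comap (f₁.coprod (-g₁)) ((r • f₂).coprod ((1 - r) • g₂))
        + u.comap (((1 - r) • f₁).coprod (r • g₁)) (f₂.coprod (-g₂))).c n m k hk x y
      = (u.comap f₁ f₂).c n m k hk x.1 y.1 - (u.comap g₁ g₂).c n m k hk x.2 y.2 := by
  simpa [Cup.add_c, Mor.neg_f, Mor.smul_f, sub_eq_add_neg] using
    bilin_interpolation (u.c n m k hk) r (f₁.f n x.1) (g₁.f n x.2) (f₂.f m y.1) (g₂.f m y.2)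

theorem Cup.prod_map_coprod_neg_c_apply (u : Cup A₁ A₂ A₃) (v : Cup B₁ B₂ B₃)
    (f : Mor A₃ C₃) (g : Mor B₃ C₃) (n m k : ℤ) (hk : n + m = k)
    (x : (A₁.prod B₁).X n) (y : (A₂.prod B₂).X m) :
    ((u.prod v).map (f.coprod (-g))).c n m k hk x y
      = (u.map f).c n m k hk x.1 y.1 - (v.map g).c n m k hk x.2 y.2 :=
  (sub_eq_add_neg _ _).symm

theorem prodAssoc_symm_Ed {A B C : Cx R} (f : Mor A C) (g : Mor B C) (n : ℤ)
    (p : A.X (n + 1) × B.X (n + 1) × C.X n) :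
    (LinearEquiv.prodAssoc R _ _ _).symm (Ed f g n p)
      = (f.coprod (-g)).fiberD n ((LinearEquiv.prodAssoc R _ _ _).symm p) := by
  obtain ⟨a, b, c⟩ := p
  have component : -f.f (n + 1) a + g.f (n + 1) b - C.d n c
      = -(f.f (n + 1) a + -g.f (n + 1) b) - C.d n c := by abel
  exact Prod.ext rfl component

variable {f₁ : Mor A₁ C₁} {f₂ : Mor A₂ C₂} {f₃ : Mor A₃ C₃}
  {g₁ : Mor B₁ C₁} {g₂ : Mor B₂ C₂} {g₃ : Mor B₃ C₃}
  {cupA : Cup A₁ A₂ A₃} {cupB : Cup B₁ B₂ B₃} {cupC : Cup C₁ C₂ C₃}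

/-- The homotopy `h_f - h_g` between pairings on `Aᵢ• ⊕ Bᵢ•`. Its source `f₁ ∪ f₂ - g₁ ∪ g₂` is
written in the form that `Cup.Homotopy.fiberCup` takes. -/
def Cup.Homotopy.difference
    (Hf : Cup.Homotopy (cupC.comap f₁ f₂) (cupA.map f₃))
    (Hg : Cup.Homotopy (cupC.comap g₁ g₂) (cupB.map g₃)) (r : R) :
    Cup.Homotopy
      (cupC.comap (f₁.coprod (-g₁)) ((r • f₂).coprod ((1 - r) • g₂))
        + cupC.comap (((1 - r) • f₁).coprod (r • g₁)) (f₂.coprod (-g₂)))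
      ((cupA.prod cupB).map (f₃.coprod (-g₃))) where
  h n m k e := (Hf.h n m k e).compl₁₂ (.fst R _ _) (.fst R _ _)
    - (Hg.h n m k e).compl₁₂ (.snd R _ _) (.snd R _ _)
  comm n m k e x y := by
    have hf := Hf.comm n m k e x.1 y.1
    have hg := Hg.comm n m k e x.2 y.2
    rw [Cup.interpolation_c_apply, Cup.prod_map_coprod_neg_c_apply]
    simp only [LinearMap.sub_apply, LinearMap.compl₁₂_apply, LinearMap.fst_apply,
      LinearMap.snd_apply, LinearMap.prodMap_apply, map_sub]
    linear_combination (norm := module) hf - hg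

theorem prodAssoc_symm_cupE
    (Hf : Cup.Homotopy (cupC.comap f₁ f₂) (cupA.map f₃))
    (Hg : Cup.Homotopy (cupC.comap g₁ g₂) (cupB.map g₃)) (r : R) (n m k : ℤ) (hk : n + m = k)
    (p : A₁.X (n + 1) × B₁.X (n + 1) × C₁.X n) (q : A₂.X (m + 1) × B₂.X (m + 1) × C₂.X m) :
    (LinearEquiv.prodAssoc R _ _ _).symm
        (cupE f₁ f₂ g₁ g₂ cupA cupB cupC Hf.h Hg.h r n m k hk p q)
      = (Hf.difference Hg r).fiberCup n m k hk
          ((LinearEquiv.prodAssoc R _ _ _).symm p) ((LinearEquiv.prodAssoc R _ _ _).symm q) :=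
  rfl

end Difference

/-- Given the data P1)-P3) (diagrams `Aᵢ → Cᵢ ← Bᵢ`, cup
products `∪_A, ∪_B, ∪_C` and homotopies
`h_f : ∪_C ∘ (f₁ ⊗ f₂) ⇝ f₃ ∘ ∪_A`, `h_g : ∪_C ∘ (g₁ ⊗ g₂) ⇝ g₃ ∘ ∪_B`),
for each `r ∈ R` the formula `∪_{r,h}` defines a morphism of complexes
`E₁• ⊗ E₂• → E₃•`. -/
theorem statement4 {R : Type} [CommRing R]
    (A₁ A₂ A₃ B₁ B₂ B₃ C₁ C₂ C₃ : Cx R)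
    (f₁ : Mor A₁ C₁) (f₂ : Mor A₂ C₂) (f₃ : Mor A₃ C₃)
    (g₁ : Mor B₁ C₁) (g₂ : Mor B₂ C₂) (g₃ : Mor B₃ C₃)
    (cupA : Cup A₁ A₂ A₃) (cupB : Cup B₁ B₂ B₃) (cupC : Cup C₁ C₂ C₃)
    (hf : ∀ n m k, n + m = k + 1 → A₁.X n →ₗ[R] A₂.X m →ₗ[R] C₃.X k)
    (hg : ∀ n m k, n + m = k + 1 → B₁.X n →ₗ[R] B₂.X m →ₗ[R] C₃.X k)
    (hfhom : ∀ (n m k : ℤ) (e : n + m = k + 1) (x : A₁.X n) (y : A₂.X m),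
      C₃.d k (hf n m k e x y)
          + hf (n + 1) m (k + 1) (by omega) (A₁.d n x) y
          + (Int.negOnePow n : ℤ) • hf n (m + 1) (k + 1) (by omega) x (A₂.d m y)
        = f₃.f (k + 1) (cupA.c n m (k + 1) (by omega) x y)
            - cupC.c n m (k + 1) (by omega) (f₁.f n x) (f₂.f m y))
    (hghom : ∀ (n m k : ℤ) (e : n + m = k + 1) (x : B₁.X n) (y : B₂.X m),
      C₃.d k (hg n m k e x y)
          + hg (n + 1) m (k + 1) (by omega) (B₁.d n x) y
          + (Int.negOnePow n : ℤ) • hg n (m + 1) (k + 1) (by omega) x (B₂.d m y)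
        = g₃.f (k + 1) (cupB.c n m (k + 1) (by omega) x y)
            - cupC.c n m (k + 1) (by omega) (g₁.f n x) (g₂.f m y))
    (r : R) :
    ∀ (n m k : ℤ) (hk : n + m = k)
      (p : A₁.X (n + 1) × B₁.X (n + 1) × C₁.X n)
      (q : A₂.X (m + 1) × B₂.X (m + 1) × C₂.X m),
      Ed f₃ g₃ (k + 1) (cupE f₁ f₂ g₁ g₂ cupA cupB cupC hf hg r n m k hk p q)
        = cupE f₁ f₂ g₁ g₂ cupA cupB cupC hf hg r (n + 1) m (k + 1) (by omega)
            (Ed f₁ g₁ n p) q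
          + (Int.negOnePow (n + 1) : ℤ) •
              cupE f₁ f₂ g₁ g₂ cupA cupB cupC hf hg r n (m + 1) (k + 1) (by omega)
                p (Ed f₂ g₂ m q) := by
  intro n m k hk p q
  obtain ⟨Hf, rfl⟩ : ∃ H : Cup.Homotopy (cupC.comap f₁ f₂) (cupA.map f₃), H.h = hf :=
    ⟨⟨hf, hfhom⟩, rfl⟩
  obtain ⟨Hg, rfl⟩ : ∃ H : Cup.Homotopy (cupC.comap g₁ g₂) (cupB.map g₃), H.h = hg :=
    ⟨⟨hg, hghom⟩, rfl⟩
  apply (LinearEquiv.prodAssoc R _ _ _).symm.injective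
  simp only [map_add, map_zsmul, prodAssoc_symm_Ed, prodAssoc_symm_cupE]
  exact (Hf.difference Hg r).fiberD_fiberCup n m k hk _ _
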